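/- Let V ⊆ S^4 be a cube tiling code, let Q be a simple component of V, and let U(Q) be the simple cube tiling code containing Q. Then it is possible to pass from V to U(Q) by gluing and cutting keeping Q fixed throughout the sequence of operations. -/

import Mathlib

/- Common framework: polybox codes over a finite alphabet `S` with a
complementation `c : S → S` (an involution without fixed points). -/

namespace PolyboxPaper

variable {S : Type} [Fintype S] [DecidableEq S] {d : ℕ}

/-- Two words are dichotomous: they differ by complementation at some position. -/
def Dich (c : S → S) (v w : Fin d → S) : Prop := ∃ i, v i = c (w i)

instance (c : S → S) (v w : Fin d → S) : Decidable (Dich c v w) :=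
  decidable_of_iff (∃ i, v i = c (w i)) Iff.rfl

/-- A polybox code: every two distinct words are dichotomous. -/
def IsCode (c : S → S) (V : Finset (Fin d → S)) : Prop :=
  ∀ v ∈ V, ∀ w ∈ V, v ≠ w → Dich c v w

/-- A cube tiling code: a polybox code with `2 ^ d` words. -/
def CubeTiling (c : S → S) (V : Finset (Fin d → S)) : Prop :=
  IsCode c V ∧ V.card = 2 ^ d

/-- `v` and `w` form a twin pair in the `i`-th direction. -/
def TwinPair (c : S → S) (v w : Fin d → S) (i : Fin d) : Prop :=
  v i = c (w i) ∧ ∀ j, j ≠ i → v j = w j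

/-- A code is twin pair free if no two of its words form a twin pair. -/
def TwinPairFree (c : S → S) (V : Finset (Fin d → S)) : Prop :=
  ∀ v ∈ V, ∀ w ∈ V, ∀ i, ¬ TwinPair c v w i

/-- A single glue-and-cut operation: a twin pair `v, w` of `V` in the `i`-th
direction is replaced by a twin pair `q, t` in the `i`-th direction agreeing
with `v` (and `w`) at all positions `j ≠ i`. -/
def GCStep (c : S → S) (V W : Finset (Fin d → S)) : Prop :=
  ∃ (v w q t : Fin d → S) (i : Fin d), v ∈ V ∧ w ∈ V ∧ TwinPair c v w i ∧
    TwinPair c q t i ∧ (∀ j, j ≠ i → q j = v j) ∧ W = (V \ {v, w}) ∪ {q, t}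

/-- `W` is obtained from `V` by gluing and cutting (finite, possibly empty,
sequence of single glue-and-cut operations); equivalently, `V` and `W` are
strongly equivalent. -/
def GC (c : S → S) (V W : Finset (Fin d → S)) : Prop :=
  Relation.ReflTransGen (GCStep c) V W

/-- Passing from `V` to `W` by gluing and cutting keeping `Q` fixed:
every intermediate code contains `Q`. -/
def GCFix (c : S → S) (Q V W : Finset (Fin d → S)) : Prop :=
  Relation.ReflTransGen (fun A B => GCStep c A B ∧ Q ⊆ B) V W

/-- A realization: for each coordinate a map `f i : S → Set (X i)` taking
nonempty proper values and sending complementary letters to complementary sets. -/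
def IsRealization (c : S → S) (X : Fin d → Type) (f : ∀ i, S → Set (X i)) : Prop :=
  ∀ i s, (f i s).Nonempty ∧ f i s ≠ Set.univ ∧ f i (c s) = (f i s)ᶜ

/-- The box associated to a word by a realization. -/
def box {X : Fin d → Type} (f : ∀ i, S → Set (X i)) (v : Fin d → S) :
    Set (∀ i, X i) :=
  {x | ∀ i, x i ∈ f i (v i)}

/-- The word `w` is covered by the code `V` (`w ⊑ V`). -/
def CoveredWord (c : S → S) (w : Fin d → S) (V : Finset (Fin d → S)) : Prop :=
  ∀ (X : Fin d → Type) (f : ∀ i, S → Set (X i)), IsRealization c X f →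
    box f w ⊆ ⋃ v ∈ V, box f v

/-- `V ⊑ W`: every word of `V` is covered by `W`. -/
def Covered (c : S → S) (V W : Finset (Fin d → S)) : Prop :=
  ∀ v ∈ V, CoveredWord c v W

/-- Equivalent codes: `V ⊑ W` and `W ⊑ V`. -/
def Equivalent (c : S → S) (V W : Finset (Fin d → S)) : Prop :=
  Covered c V W ∧ Covered c W V

/-- `V ⊑̇ W`: `V ⊑ W` and no word of `V` belongs to any code obtained from `W`
by gluing and cutting. -/
def DotCovered (c : S → S) (V W : Finset (Fin d → S)) : Prop :=
  Covered c V W ∧ ∀ v ∈ V, ∀ W', GC c W W' → v ∉ W'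

/-- The density `δ(V, W)`. -/
noncomputable def delta (c : S → S) (V W : Finset (Fin d → S)) : ℕ∞ :=
  W.inf fun w => ((V.filter fun v => ¬ Dich c v w).card : ℕ∞)

/-- `C` is a minimal cover of the word `w`. -/
def MinCoverWord (c : S → S) (C : Finset (Fin d → S)) (w : Fin d → S) : Prop :=
  IsCode c C ∧ CoveredWord c w C ∧ ∀ q ∈ C, ¬ Dich c q w

/-- `C` is a minimal cover of the code `P`. -/
def MinCoverCode (c : S → S) (C P : Finset (Fin d → S)) : Prop :=
  IsCode c C ∧ Covered c P C ∧ ∀ q ∈ C, ∃ p ∈ P, ¬ Dich c q p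

/-- A simple polybox code. -/
def SimpleCode (c : S → S) (V : Finset (Fin d → S)) : Prop :=
  ∀ i : Fin d, ∃ s : S, ∀ v ∈ V, v i = s ∨ v i = c s

/-- A simple cube tiling code `{s₁, s₁'} × ⋯ × {s_d, s_d'}`. -/
def SimpleCubeTiling (c : S → S) (U : Finset (Fin d → S)) : Prop :=
  ∃ s : Fin d → S, ∀ v : Fin d → S, v ∈ U ↔ ∀ i, v i = s i ∨ v i = c (s i)

/-- Word whose first four coordinates are `x0 x1 x2 x3` and which agrees with
`r` elsewhere. -/
def specialWord (r : Fin d → S) (x0 x1 x2 x3 : S) : Fin d → S := fun i =>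
  if (i : ℕ) = 0 then x0 else if (i : ℕ) = 1 then x1 else if (i : ℕ) = 2 then x2
  else if (i : ℕ) = 3 then x3 else r i

/-- The special pair of 12-word codes (Theorem 1 of the paper). -/
def SpecialPair (c : S → S) (V W : Finset (Fin d → S)) : Prop :=
  ∃ (a b : S) (r : Fin d → S), a ≠ b ∧ a ≠ c b ∧
    V = {specialWord r a (c a) b (c b), specialWord r a b (c b) a,
         specialWord r a (c b) (c b) (c b), specialWord r (c a) a (c b) (c b),
         specialWord r (c a) (c a) a (c b), specialWord r (c a) b (c b) b,
         specialWord r b a b (c b), specialWord r b b b b,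
         specialWord r b (c b) (c a) b, specialWord r (c b) a b (c a),
         specialWord r (c b) (c a) b b, specialWord r (c b) (c b) (c b) b} ∧
    W = {specialWord r (c a) (c a) (c a) b, specialWord r (c a) b a (c a),
         specialWord r b a (c a) a, specialWord r a (c a) (c a) a,
         specialWord r (c a) a (c a) (c a), specialWord r a b b (c a),
         specialWord r b b a a, specialWord r a (c b) (c a) (c a),
         specialWord r (c b) a (c b) a, specialWord r (c b) (c a) a a,
         specialWord r (c b) (c b) a (c a), specialWord r b (c b) a (c b)}

/-- An isomorphism of `S^d`: a permutation of coordinates followed by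
position bijections commuting with complementation. -/
def IsIso (c : S → S) (Φ : (Fin d → S) → Fin d → S) : Prop :=
  ∃ (σ : Equiv.Perm (Fin d)) (h : Fin d → S → S),
    (∀ i, Function.Bijective (h i)) ∧ (∀ i s, h i (c s) = c (h i s)) ∧
    ∀ v i, Φ v i = h i (v (σ i))

/-- The pair `(V, W)` is, up to isomorphism, the special pair. -/
def SpecialPairUpToIso (c : S → S) (V W : Finset (Fin d → S)) : Prop :=
  ∃ Φ, IsIso c Φ ∧
    (SpecialPair c (V.image Φ) (W.image Φ) ∨ SpecialPair c (W.image Φ) (V.image Φ))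


section Aux

variable {S : Type} [Fintype S] [DecidableEq S] {d : ℕ}

/-- Points of the generic realization: choices of one letter out of every complementary pair. -/
abbrev Pt (c : S → S) := {x : S → Bool // ∀ s, x (c s) = !(x s)}

theorem exists_pt (c : S → S) (hc : ∀ s, c (c s) = s) (hc' : ∀ s, c s ≠ s) :
    Nonempty (Pt c) := by
  let e := Fintype.equivFin S
  refine ⟨⟨fun s => decide (e s < e (c s)), fun s => ?_⟩⟩
  have h : e s ≠ e (c s) := fun h => hc' s (e.injective h).symm
  simp only [hc]
  rcases lt_or_gt_of_ne h with h | h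
  · simp [h, h.le]
  · simp [h, h.le]

theorem exists_flip (c : S → S) (hc : ∀ s, c (c s) = s) (x : Pt c) (t : S) :
    ∃ y : Pt c, y.1 t = !(x.1 t) ∧ ∀ s, s ≠ t → s ≠ c t → y.1 s = x.1 s := by
  refine ⟨⟨fun s => if s = t ∨ s = c t then !(x.1 s) else x.1 s, fun s => ?_⟩, ?_, ?_⟩
  · have h1 : (c s = t ∨ c s = c t) ↔ (s = t ∨ s = c t) := by
      constructor
      · rintro (h | h)
        · right; rw [← h, hc]
        · left; rw [← hc s, h, hc]
      · rintro (h | h)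
        · right; rw [h]
        · left; rw [h, hc]
    simp only [h1, x.2 s]
    split_ifs <;> rfl
  · simp
  · intro s h1 h2
    simp [h1, h2]

theorem exists_pt1 (c : S → S) (hc : ∀ s, c (c s) = s) (hc' : ∀ s, c s ≠ s) (s : S) :
    ∃ x : Pt c, x.1 s = true := by
  obtain ⟨x⟩ := exists_pt c hc hc'
  by_cases h : x.1 s = true
  · exact ⟨x, h⟩
  · obtain ⟨y, hy, -⟩ := exists_flip c hc x s
    exact ⟨y, by rw [hy]; simpa using h⟩

theorem exists_pt2 (c : S → S) (hc : ∀ s, c (c s) = s) (hc' : ∀ s, c s ≠ s) (s t : S)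
    (h : s ≠ c t) : ∃ x : Pt c, x.1 s = true ∧ x.1 t = true := by
  obtain ⟨x, hx⟩ := exists_pt1 c hc hc' s
  by_cases ht : x.1 t = true
  · exact ⟨x, hx, ht⟩
  · obtain ⟨y, hy, hy2⟩ := exists_flip c hc x t
    refine ⟨y, ?_, by rw [hy]; simpa using ht⟩
    rw [hy2 s (fun e => ht (e ▸ hx)) h, hx]

theorem not_dich_of_pt (c : S → S) (p : Fin d → Pt c) (v w : Fin d → S)
    (hv : ∀ m, (p m).1 (v m) = true) (hw : ∀ m, (p m).1 (w m) = true) : ¬ Dich c v w := by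
  rintro ⟨i, hi⟩
  have := hv i
  rw [hi, (p i).2, hw i] at this
  simp at this

theorem half_pt (c : S → S) (s : S) :
    2 * (Finset.univ.filter fun x : Pt c => x.1 s = true).card = Fintype.card (Pt c) := by
  have h1 := Finset.card_filter_add_card_filter_not (s := (Finset.univ : Finset (Pt c)))
    (fun x : Pt c => x.1 s = true)
  have h2 : (Finset.univ.filter fun x : Pt c => x.1 s = true).card
      = (Finset.univ.filter fun x : Pt c => ¬ x.1 s = true).card := by
    let n : Pt c → Pt c := fun x => ⟨fun s => !(x.1 s), fun s => by simp [x.2 s]⟩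
    have hn : ∀ x, n (n x) = x := fun x => by ext s; simp [n]
    refine Finset.card_bij' (fun x _ => n x) (fun x _ => n x) ?_ ?_ ?_ ?_
    · intro x hx; simpa [n] using hx
    · intro x hx; simpa [n] using hx
    · intro x _; exact hn x
    · intro x _; exact hn x
  rw [Finset.card_univ] at h1
  omega

/-- Number of words of a tiling covering a point is one. -/
theorem count_one (c : S → S) (V : Finset (Fin d → S)) (hV : CubeTiling c V)
    (p : Fin d → Pt c) :
    (V.filter fun v => ∀ m, (p m).1 (v m) = true).card = 1 := by
  classical
  have hle : ∀ p : Fin d → Pt c, (V.filter fun v => ∀ m, (p m).1 (v m) = true).card ≤ 1 := by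
    intro p
    rw [Finset.card_le_one]
    intro a ha b hb
    simp only [Finset.mem_filter] at ha hb
    by_contra hab
    exact not_dich_of_pt c p a b ha.2 hb.2 (hV.1 a ha.1 b hb.1 hab)
  have hsum : ∑ p : Fin d → Pt c, (V.filter fun v => ∀ m, (p m).1 (v m) = true).card
      = ∑ p : Fin d → Pt c, 1 := by
    have h1 : ∀ v : Fin d → S,
        2 ^ d * (Finset.univ.filter fun p : Fin d → Pt c => ∀ m, (p m).1 (v m) = true).card
          = Fintype.card (Fin d → Pt c) := by
      intro v
      have : (Finset.univ.filter fun p : Fin d → Pt c => ∀ m, (p m).1 (v m) = true)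
          = Fintype.piFinset fun m => Finset.univ.filter fun x : Pt c => x.1 (v m) = true := by
        ext p; simp
      rw [this, Fintype.card_piFinset]
      have h2 : (2 : ℕ) ^ d = ∏ _m : Fin d, 2 := by simp
      rw [h2, ← Finset.prod_mul_distrib]
      simp only [half_pt]
      simp
    have h3 : ∑ p : Fin d → Pt c, (V.filter fun v => ∀ m, (p m).1 (v m) = true).card
        = ∑ v ∈ V,
          (Finset.univ.filter fun p : Fin d → Pt c => ∀ m, (p m).1 (v m) = true).card := by
      simp only [Finset.card_filter]
      rw [Finset.sum_comm]
    rw [h3]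
    have h4 : (2 : ℕ) ^ d * ∑ v ∈ V,
        (Finset.univ.filter fun p : Fin d → Pt c => ∀ m, (p m).1 (v m) = true).card
        = 2 ^ d * ∑ p : Fin d → Pt c, 1 := by
      rw [Finset.mul_sum, Finset.sum_congr rfl (fun v _ => h1 v)]
      simp [hV.2]
    exact Nat.eq_of_mul_eq_mul_left (by positivity) h4
  exact (Finset.sum_eq_sum_iff_of_le (fun p _ => hle p)).1 hsum p (Finset.mem_univ p)

theorem cover (c : S → S) (V : Finset (Fin d → S)) (hV : CubeTiling c V)
    (p : Fin d → Pt c) : ∃ v ∈ V, ∀ m, (p m).1 (v m) = true := by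
  have h := count_one c V hV p
  obtain ⟨v, hv⟩ := Finset.card_pos.1 (by rw [h]; exact one_pos)
  rw [Finset.mem_filter] at hv
  exact ⟨v, hv⟩

/-- integer indicator of a letter at a point -/
def ind (c : S → S) (x : Pt c) (s : S) : ℤ := if x.1 s = true then 1 else 0

theorem mixed_sum (c : S → S) (V : Finset (Fin d → S)) (hV : CubeTiling c V)
    (J : Finset (Fin d)) : ∀ a b : Fin d → Pt c,
    ∑ v ∈ V, ∏ m, (if m ∈ J then ind c (a m) (v m) - ind c (b m) (v m) else ind c (a m) (v m))
      = if J = ∅ then 1 else 0 := by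
  classical
  induction J using Finset.induction_on with
  | empty =>
    intro a b
    have h := count_one c V hV a
    rw [Finset.card_filter] at h
    simp only [Finset.notMem_empty, if_false, if_true]
    have h2 : ∀ v : Fin d → S, ∏ m, ind c (a m) (v m)
        = ((if ∀ m, (a m).1 (v m) = true then 1 else 0 : ℕ) : ℤ) := by
      intro v
      simp only [ind]
      rw [Finset.prod_ite_zero]
      simp
    rw [Finset.sum_congr rfl (fun v _ => h2 v)]
    exact_mod_cast h
  | insert j J hj ih =>
    intro a b
    have h1 := ih a b
    have h2 := ih (Function.update a j (b j)) b
    have key : ∀ v : Fin d → S,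
        ∏ m, (if m ∈ insert j J then ind c (a m) (v m) - ind c (b m) (v m)
          else ind c (a m) (v m))
        = ∏ m, (if m ∈ J then ind c (a m) (v m) - ind c (b m) (v m) else ind c (a m) (v m))
        - ∏ m, (if m ∈ J then ind c (Function.update a j (b j) m) (v m) - ind c (b m) (v m)
          else ind c (Function.update a j (b j) m) (v m)) := by
      intro v
      rw [Fintype.prod_eq_mul_prod_compl j, Fintype.prod_eq_mul_prod_compl j,
        Fintype.prod_eq_mul_prod_compl j]
      have e1 : ∏ m ∈ {j}ᶜ, (if m ∈ insert j J then ind c (a m) (v m) - ind c (b m) (v m)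
          else ind c (a m) (v m)) = ∏ m ∈ {j}ᶜ, (if m ∈ J then ind c (a m) (v m)
            - ind c (b m) (v m) else ind c (a m) (v m)) := by
        refine Finset.prod_congr rfl fun m hm => ?_
        have : m ≠ j := by simpa using hm
        simp [this]
      have e2 : ∏ m ∈ {j}ᶜ, (if m ∈ J then ind c (Function.update a j (b j) m) (v m)
          - ind c (b m) (v m) else ind c (Function.update a j (b j) m) (v m))
          = ∏ m ∈ {j}ᶜ, (if m ∈ J then ind c (a m) (v m)
            - ind c (b m) (v m) else ind c (a m) (v m)) := by
        refine Finset.prod_congr rfl fun m hm => ?_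
        have : m ≠ j := by simpa using hm
        simp [this]
      rw [e1, e2]
      simp [hj, sub_mul]
    rw [Finset.sum_congr rfl (fun v _ => key v), Finset.sum_sub_distrib, h1, h2]
    simp

theorem line (c : S → S) (hc : ∀ s, c (c s) = s) (hc' : ∀ s, c s ≠ s)
    (V : Finset (Fin d → S)) (hV : CubeTiling c V) (y : Fin d → S) (i : Fin d)
    (h : ∀ v ∈ V, ¬ Dich c v y → ∀ m, m ≠ i → v m = y m) :
    y ∈ V ∨ ∃ v ∈ V, ∃ w ∈ V, TwinPair c v w i ∧ v i ≠ y i ∧ v i ≠ c (y i) := by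
  choose p hp using fun m => exists_pt1 c hc hc' (y m)
  obtain ⟨v, hv, hpv⟩ := cover c V hV p
  have hvy := not_dich_of_pt c p v y hpv hp
  by_cases hi : v i = y i
  · left
    have : v = y := by
      funext m
      by_cases hm : m = i
      · rw [hm, hi]
      · exact h v hv hvy m hm
    rwa [← this]
  · right
    have hi2 : v i ≠ c (y i) := fun e => hvy ⟨i, e⟩
    obtain ⟨x, hx1, hx2⟩ := exists_flip c hc (p i) (v i)
    have hpy : ∀ m, (Function.update p i x m).1 (y m) = true := by
      intro m
      by_cases hm : m = i
      · subst hm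
        rw [Function.update_self, hx2 _ (Ne.symm hi) (fun e => hi2 (by rw [e, hc])), hp]
      · rw [Function.update_of_ne hm, hp]
    obtain ⟨w, hw, hpw⟩ := cover c V hV (Function.update p i x)
    have hwy := not_dich_of_pt c _ w y hpw hpy
    have hne : v ≠ w := by
      rintro rfl
      have := hpw i
      rw [Function.update_self, hx1, hpv] at this
      simp at this
    refine ⟨v, hv, w, hw, ⟨?_, ?_⟩, hi, hi2⟩
    · obtain ⟨m, hm⟩ := hV.1 v hv w hw hne
      by_cases hmi : m = i
      · rwa [hmi] at hm
      · rw [h v hv hvy m hmi, h w hw hwy m hmi] at hm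
        exact absurd hm.symm (hc' _)
    · intro m hm
      rw [h v hv hvy m hm, h w hw hwy m hm]

/-- a twin pair in a direction whose letter is not that of `q` -/
def BadTwin (c : S → S) (q : Fin d → S) (V : Finset (Fin d → S)) : Prop :=
  ∃ v ∈ V, ∃ w ∈ V, ∃ i, TwinPair c v w i ∧ v i ≠ q i ∧ v i ≠ c (q i)

/-- the rigid configuration -/
def Config (c : S → S) (q : Fin 4 → S) (V : Finset (Fin 4 → S)) : Prop :=
  ∃ i j k l : Fin 4, j ≠ i ∧ k ≠ i ∧ l ≠ i ∧ j ≠ k ∧ j ≠ l ∧ k ≠ l ∧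
    (∀ m, m = i ∨ m = j ∨ m = k ∨ m = l) ∧
    ∃ w ∈ V, ∃ v ∈ V, ∃ x ∈ V, ∃ y ∈ V,
      v i = w i ∧ v j = c (w j) ∧ v k = c (w k) ∧ v l = c (w l) ∧
      x i = w i ∧ x j = c (w j) ∧ x k = w k ∧ x l ≠ w l ∧ x l ≠ c (w l) ∧
      TwinPair c x y l ∧
      (∀ m, m ≠ i → w m ≠ q m ∧ w m ≠ c (q m))

theorem config_end (c : S → S) (hc : ∀ s, c (c s) = s) (hc' : ∀ s, c s ≠ s)
    (V : Finset (Fin 4 → S)) (hV : CubeTiling c V) (q : Fin 4 → S) (i j k l : Fin 4)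
    (hji : j ≠ i) (hki : k ≠ i) (hli : l ≠ i) (hjk : j ≠ k) (hjl : j ≠ l) (hkl : k ≠ l)
    (hall : ∀ m, m = i ∨ m = j ∨ m = k ∨ m = l)
    (w v x : Fin 4 → S) (hw : w ∈ V) (hv : v ∈ V) (hx : x ∈ V)
    (hvi : v i = w i) (hvj : v j = c (w j)) (hvk : v k = c (w k)) (hvl : v l = c (w l))
    (hxi : x i = w i) (hxj : x j = c (w j)) (hxk : x k = w k) (hxl : x l ≠ c (w l))
    (hwi : w i = c (q i)) (hbad : ∀ m, m ≠ i → w m ≠ q m ∧ w m ≠ c (q m)) :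
    BadTwin c q V ∨ Config c q V := by
  have cinj : ∀ {s t : S}, c s = c t → s = t := fun {s t} h => by rw [← hc s, h, hc]
  by_cases hxl2 : x l = w l
  · left
    refine ⟨w, hw, x, hx, j, ⟨by rw [hxj, hc], ?_⟩, (hbad j hji)⟩
    intro m hm
    rcases hall m with rfl | rfl | rfl | rfl
    · exact hxi.symm
    · exact absurd rfl hm
    · exact hxk.symm
    · exact hxl2.symm
  set y : Fin 4 → S := Function.update x l (c (x l)) with hy
  have yl : y l = c (x l) := by simp [hy]
  have yo : ∀ m, m ≠ l → y m = x m := fun m hm => by simp [hy, hm]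
  have yi : y i = w i := by rw [yo i (Ne.symm hli), hxi]
  have yj : y j = c (w j) := by rw [yo j hjl, hxj]
  have yk : y k = w k := by rw [yo k hkl, hxk]
  have hline := line c hc hc' V hV y i (by
    intro z hz hzy
    have hzy' : ∀ m, z m ≠ c (y m) := fun m e => hzy ⟨m, e⟩
    have zl : z l = y l := by
      have hne : z ≠ x := by
        rintro rfl
        exact hzy' l (by rw [yl, hc])
      obtain ⟨m, hm⟩ := hV.1 z hz x hx hne
      by_cases hml : m = l
      · rw [hml] at hm; rw [hm, yl]
      · exact absurd (by rw [yo m hml]; exact hm) (hzy' m)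
    have zj : z j = y j := by
      have hne : z ≠ w := by
        rintro rfl
        exact hzy' j (by rw [yj, hc])
      obtain ⟨m, hm⟩ := hV.1 z hz w hw hne
      rcases hall m with rfl | rfl | rfl | rfl
      · exact absurd (by rw [yi]; exact hm) (hzy' _)
      · rw [hm, yj]
      · exact absurd (by rw [yk]; exact hm) (hzy' _)
      · rw [zl, yl] at hm
        exact absurd (cinj hm) hxl2
    have zk : z k = y k := by
      have hne : z ≠ v := by
        rintro rfl
        exact hzy' k (by rw [yk, hvk])
      obtain ⟨m, hm⟩ := hV.1 z hz v hv hne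
      rcases hall m with rfl | rfl | rfl | rfl
      · exact absurd (by rw [yi, ← hvi]; exact hm) (hzy' _)
      · exact absurd (by rw [yj, ← hvj]; exact hm) (hzy' _)
      · rw [hm, hvk, hc, yk]
      · rw [zl, yl, hvl, hc] at hm
        exact absurd (by rw [← hm, hc]) hxl
    intro m hm
    rcases hall m with rfl | rfl | rfl | rfl
    · exact absurd rfl hm
    · exact zj
    · exact zk
    · exact zl)
  rcases hline with hyV | ⟨a, ha, b, hb, hab, h1, h2⟩
  · right
    refine ⟨i, j, k, l, hji, hki, hli, hjk, hjl, hkl, hall, w, hw, v, hv, x, hx, y, hyV,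
      hvi, hvj, hvk, hvl, hxi, hxj, hxk, hxl2, hxl, ⟨by rw [yl, hc], fun m hm => (yo m hm).symm⟩,
      hbad⟩
  · left
    refine ⟨a, ha, b, hb, i, hab, ?_, ?_⟩
    · rw [yi, hwi, hc] at h2; exact h2
    · rw [yi, hwi] at h1; exact h1

theorem neighbour (c : S → S) (hc : ∀ s, c (c s) = s) (hc' : ∀ s, c s ≠ s)
    (V : Finset (Fin 4 → S)) (hV : CubeTiling c V) (q : Fin 4 → S) (hq : q ∈ V) (i : Fin 4) :
    Function.update q i (c (q i)) ∈ V ∨ BadTwin c q V ∨ Config c q V := by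
  classical
  by_contra hcon
  push Not at hcon
  obtain ⟨huV, hnb, hnc⟩ := hcon
  have cinj : ∀ {s t : S}, c s = c t → s = t := fun {s t} h => by rw [← hc s, h, hc]
  set u : Fin 4 → S := Function.update q i (c (q i)) with hu
  have ui : u i = c (q i) := by simp [hu]
  have uo : ∀ m, m ≠ i → u m = q m := fun m hm => by simp [hu, hm]
  have hD : ∀ v ∈ V, ¬ Dich c v u → v i = u i := by
    intro v hv hvu
    have hne : v ≠ q := by
      rintro rfl
      exact hvu ⟨i, by rw [ui, hc]⟩
    obtain ⟨m, hm⟩ := hV.1 v hv q hq hne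
    by_cases hmi : m = i
    · rw [hmi] at hm; rw [hm, ui]
    · exact absurd ⟨m, by rw [uo m hmi]; exact hm⟩ hvu
  choose pu hpu using fun m => exists_pt1 c hc hc' (u m)
  obtain ⟨w0, hw0, hpw0⟩ := cover c V hV pu
  have hne : (V.filter fun v => ¬ Dich c v u).Nonempty :=
    ⟨w0, Finset.mem_filter.2 ⟨hw0, not_dich_of_pt c pu w0 u hpw0 hpu⟩⟩
  obtain ⟨w, hwD, hmax⟩ := Finset.exists_max_image _
    (fun v : Fin 4 → S => (Finset.univ.filter fun m => v m ≠ u m).card) hne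
  rw [Finset.mem_filter] at hwD
  obtain ⟨hw, hwu⟩ := hwD
  have hwu' : ∀ m, w m ≠ c (u m) := fun m e => hwu ⟨m, e⟩
  have hwi : w i = u i := hD w hw hwu
  set B := Finset.univ.filter fun m => w m ≠ u m with hB
  have memB : ∀ m, m ∈ B ↔ w m ≠ u m := fun m => by simp [hB]
  have hiB : i ∉ B := by rw [memB]; simpa using hwi
  have hBne : B ≠ ∅ := by
    intro h
    apply huV
    have : w = u := by
      funext m
      by_contra hm
      have := (memB m).2 hm
      rw [h] at this
      simp at this
    rwa [← this]
  -- points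
  choose a ha using fun m => exists_pt2 c hc hc' (w m) (u m) (hwu' m)
  choose b hb using fun m => exists_flip c hc (a m) (w m)
  have hsum := mixed_sum c V hV B a b
  rw [if_neg hBne] at hsum
  set F : (Fin 4 → S) → ℤ := fun v => ∏ m, (if m ∈ B then ind c (a m) (v m) - ind c (b m) (v m)
    else ind c (a m) (v m)) with hF
  have hdiff : ∀ m s, ind c (a m) s - ind c (b m) s
      = if s = w m then 1 else if s = c (w m) then -1 else 0 := by
    intro m s
    by_cases h1 : s = w m
    · subst h1
      simp [ind, (ha m).1, (hb m).1]
    · by_cases h2 : s = c (w m)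
      · simp [ind, h1, h2, (a m).2, (b m).2, (ha m).1, (hb m).1, hc']
      · simp [ind, h1, h2, (hb m).2 s h1 h2]
  have hFw : F w = 1 := by
    rw [hF]
    apply Finset.prod_eq_one
    intro m _
    split_ifs
    · rw [hdiff]; simp
    · simp [ind, (ha m).1]
  obtain ⟨v, hv, hFv⟩ : ∃ v ∈ V, F v < 0 := by
    by_contra hcon
    push Not at hcon
    have : 0 < ∑ v ∈ V, F v := Finset.sum_pos' hcon ⟨w, hw, by rw [hFw]; exact one_pos⟩
    exact absurd hsum this.ne'
  have hfac : ∀ m, (if m ∈ B then ind c (a m) (v m) - ind c (b m) (v m)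
      else ind c (a m) (v m)) ≠ 0 := by
    intro m h
    rw [hF] at hFv
    simp only at hFv
    rw [Finset.prod_eq_zero (Finset.mem_univ m) h] at hFv
    exact lt_irrefl _ hFv
  have hvB : ∀ m ∈ B, v m = w m ∨ v m = c (w m) := by
    intro m hm
    have := hfac m
    rw [if_pos hm, hdiff] at this
    by_contra hcon
    push Not at hcon
    simp [hcon.1, hcon.2] at this
  have hvnB : ∀ m, m ∉ B → (a m).1 (v m) = true := by
    intro m hm
    have := hfac m
    rw [if_neg hm] at this
    by_contra hcon
    simp [ind, hcon] at this
  have hvu : ¬ Dich c v u := by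
    rintro ⟨m, hm⟩
    by_cases hmB : m ∈ B
    · rcases hvB m hmB with h | h
      · exact hwu' m (h ▸ hm)
      · exact (memB m).1 hmB (cinj (h ▸ hm))
    · have := hvnB m hmB
      rw [hm, (a m).2, (ha m).2] at this
      simp at this
  have hsub : B ⊆ Finset.univ.filter fun m => v m ≠ u m := by
    intro m hm
    simp only [Finset.mem_filter, Finset.mem_univ, true_and]
    rcases hvB m hm with h | h
    · rw [h]; exact (memB m).1 hm
    · rw [h]
      intro e
      exact hwu' m (by rw [← e, hc])
  have hBeq := Finset.eq_of_subset_of_card_le hsub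
    (hmax v (Finset.mem_filter.2 ⟨hv, hvu⟩))
  have hvnB2 : ∀ m, m ∉ B → v m = w m := by
    intro m hm
    have h1 : v m = u m := by
      by_contra h
      apply hm
      rw [hBeq]
      simp [h]
    have h2 : w m = u m := by
      by_contra h
      exact hm ((memB m).2 h)
    rw [h1, h2]
  set E := Finset.univ.filter fun m => v m ≠ w m with hE
  have memE : ∀ m, m ∈ E ↔ v m ≠ w m := fun m => by simp [hE]
  have hEB : E ⊆ B := by
    intro m hm
    by_contra h
    exact (memE m).1 hm (hvnB2 m h)
  have hFE : F v = (-1) ^ E.card := by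
    have : ∀ m, (if m ∈ B then ind c (a m) (v m) - ind c (b m) (v m)
      else ind c (a m) (v m)) = if v m ≠ w m then -1 else 1 := by
      intro m
      by_cases hm : m ∈ B
      · rw [if_pos hm, hdiff]
        rcases hvB m hm with h | h
        · simp [h]
        · simp [h, hc']
      · rw [if_neg hm]
        simp [hvnB2 m hm, ind, (ha m).1]
    rw [hF]
    simp only [this]
    rw [Finset.prod_ite]
    simp [hE]
  have hodd : Odd E.card := by
    by_contra h
    rw [Nat.not_odd_iff_even] at h
    rw [hFE, h.neg_one_pow] at hFv
    exact absurd hFv (by norm_num)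
  have hEi : E ⊆ Finset.univ.erase i := by
    intro m hm
    rw [Finset.mem_erase]
    exact ⟨fun e => hiB (e ▸ hEB hm), Finset.mem_univ _⟩
  have hEcard : E.card ≤ 3 := by
    have := Finset.card_le_card hEi
    simpa using this
  have hbadw : ∀ m ∈ B, w m ≠ q m ∧ w m ≠ c (q m) := by
    intro m hm
    have hmi : m ≠ i := fun e => hiB (e ▸ hm)
    rw [← uo m hmi]
    exact ⟨(memB m).1 hm, hwu' m⟩
  have hE13 : E.card = 1 ∨ E.card = 3 := by
    obtain ⟨t, ht⟩ := hodd
    omega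
  have hvE : ∀ m ∈ E, v m = c (w m) := fun m hm =>
    (hvB m (hEB hm)).resolve_left ((memE m).1 hm)
  rcases hE13 with h1 | h3
  · obtain ⟨j, hj⟩ := Finset.card_eq_one.1 h1
    have hjE : j ∈ E := by rw [hj]; simp
    apply hnb
    refine ⟨w, hw, v, hv, j, ⟨by rw [hvE j hjE, hc], ?_⟩, hbadw j (hEB hjE)⟩
    intro m hm
    by_contra h
    have : m ∈ E := (memE m).2 (Ne.symm h)
    rw [hj] at this
    exact hm (by simpa using this)
  · have hEeq : E = Finset.univ.erase i :=
      Finset.eq_of_subset_of_card_le hEi (by rw [h3]; simp)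
    have hmemE : ∀ m, m ≠ i → m ∈ E := fun m hm => by rw [hEeq]; simp [hm]
    obtain ⟨j, k, l, hjk, hjl, hkl, hjkl⟩ := Finset.card_eq_three.1 h3
    have hji : j ≠ i := by
      have : j ∈ E := by rw [hjkl]; simp
      rw [hEeq] at this; simpa using this
    have hki : k ≠ i := by
      have : k ∈ E := by rw [hjkl]; simp
      rw [hEeq] at this; simpa using this
    have hli : l ≠ i := by
      have : l ∈ E := by rw [hjkl]; simp
      rw [hEeq] at this; simpa using this
    have hall : ∀ m, m = i ∨ m = j ∨ m = k ∨ m = l := by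
      intro m
      by_cases hm : m = i
      · exact Or.inl hm
      · right
        have := hmemE m hm
        rw [hjkl] at this
        simpa using this
    have hvi : v i = w i := hvnB2 i hiB
    -- the neighbour of `w` in direction `j`
    set y : Fin 4 → S := Function.update w j (c (w j)) with hy
    have yj : y j = c (w j) := by simp [hy]
    have yo : ∀ m, m ≠ j → y m = w m := fun m hm => by simp [hy, hm]
    have hyu : ∀ m, y m ≠ c (u m) := by
      intro m
      by_cases hm : m = j
      · rw [hm, yj]
        intro e
        exact (memB j).1 (hEB (hmemE j hji)) (cinj e)
      · rw [yo m hm]; exact hwu' m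
    choose p hp using fun m => exists_pt2 c hc hc' (y m) (u m) (hyu m)
    obtain ⟨x, hx, hpx⟩ := cover c V hV p
    have hxy := not_dich_of_pt c p x y hpx (fun m => (hp m).1)
    have hxu := not_dich_of_pt c p x u hpx (fun m => (hp m).2)
    have hxi : x i = w i := by rw [hD x hx hxu, hwi]
    have hxj : x j = c (w j) := by
      have hne : x ≠ w := by
        rintro rfl
        exact hxy ⟨j, by rw [yj, hc]⟩
      obtain ⟨m, hm⟩ := hV.1 x hx w hw hne
      by_cases hmj : m = j
      · rwa [hmj] at hm
      · exact absurd ⟨m, by rw [yo m hmj]; exact hm⟩ hxy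
    have hxk' : x k ≠ c (w k) := fun e => hxy ⟨k, by rw [yo k hjk.symm]; exact e⟩
    have hxl' : x l ≠ c (w l) := fun e => hxy ⟨l, by rw [yo l hjl.symm]; exact e⟩
    have hvj := hvE j (hmemE j hji)
    have hvk := hvE k (hmemE k hki)
    have hvl := hvE l (hmemE l hli)
    have hbad : ∀ m, m ≠ i → w m ≠ q m ∧ w m ≠ c (q m) :=
      fun m hm => hbadw m (hEB (hmemE m hm))
    have hxkl : x k = w k ∨ x l = w l := by
      have hne : x ≠ v := by
        rintro rfl
        exact hxk' hvk
      obtain ⟨m, hm⟩ := hV.1 x hx v hv hne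
      rcases hall m with rfl | rfl | rfl | rfl
      · rw [hvi, hxi] at hm
        exact absurd hm.symm (hc' _)
      · rw [hvj, hxj] at hm
        exact absurd hm.symm (hc' _)
      · left; rw [hm, hvk, hc]
      · right; rw [hm, hvl, hc]
    have hwi' : w i = c (q i) := by rw [hwi, ui]
    have hfin : BadTwin c q V ∨ Config c q V := by
      rcases hxkl with hxk | hxl
      · exact config_end c hc hc' V hV q i j k l hji hki hli hjk hjl hkl hall w v x hw hv hx
          hvi hvj hvk hvl hxi hxj hxk hxl' hwi' hbad
      · exact config_end c hc hc' V hV q i j l k hji hli hki hjl hjk hkl.symm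
          (fun m => by rcases hall m with h | h | h | h <;> simp [h]) w v x hw hv hx
          hvi hvj hvl hvk hxi hxj hxl hxk' hwi' hbad
    rcases hfin with h | h
    · exact hnb h
    · exact hnc h

/-- number of bad letters of a word -/
def nbad (c : S → S) (q v : Fin d → S) : ℕ :=
  ∑ m, if v m = q m ∨ v m = c (q m) then 0 else 1

/-- total number of bad letters of a code -/
def tbad (c : S → S) (q : Fin d → S) (V : Finset (Fin d → S)) : ℕ := ∑ v ∈ V, nbad c q v

theorem nbad_update (c : S → S) (q v x : Fin d → S) (i : Fin d)
    (h : ∀ m, m ≠ i → x m = v m) :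
    nbad c q x + (if v i = q i ∨ v i = c (q i) then 0 else 1)
      = nbad c q v + (if x i = q i ∨ x i = c (q i) then 0 else 1) := by
  unfold nbad
  rw [Fintype.sum_eq_add_sum_compl i, Fintype.sum_eq_add_sum_compl i]
  have : ∀ m ∈ ({i} : Finset (Fin d))ᶜ, (if x m = q m ∨ x m = c (q m) then 0 else 1)
      = (if v m = q m ∨ v m = c (q m) then 0 else 1) := by
    intro m hm
    have : m ≠ i := by simpa using hm
    rw [h m this]
  rw [Finset.sum_congr rfl this]
  omega

/-- One controlled glue-and-cut operation with bookkeeping. -/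
theorem step (c : S → S) (hc : ∀ s, c (c s) = s) (hc' : ∀ s, c s ≠ s)
    (q : Fin d → S) (Q V : Finset (Fin d → S)) (hV : CubeTiling c V) (hQV : Q ⊆ V)
    (hQq : ∀ x ∈ Q, ∀ m, x m = q m ∨ x m = c (q m))
    (v w : Fin d → S) (i : Fin d) (hv : v ∈ V) (hw : w ∈ V) (ht : TwinPair c v w i)
    (hb : ∃ m, v m ≠ q m ∧ v m ≠ c (q m)) (r : S) :
    ∃ W : Finset (Fin d → S), CubeTiling c W ∧ Q ⊆ W ∧ (GCStep c V W ∧ Q ⊆ W) ∧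
      tbad c q W + 2 * (if v i = q i ∨ v i = c (q i) then 0 else 1)
        ≤ tbad c q V + 2 * (if r = q i ∨ r = c (q i) then 0 else 1) ∧
      Function.update v i r ∈ W ∧ Function.update v i (c r) ∈ W ∧
      ∀ x ∈ V, x ≠ v → x ≠ w → x ∈ W := by
  classical
  have cinj : ∀ {s t : S}, c s = c t → s = t := fun {s t} h => by rw [← hc s, h, hc]
  have hvw : v i = c (w i) := ht.1
  have hwv : w i = c (v i) := by rw [hvw, hc]
  have hvwne : v ≠ w := fun e => hc' (w i) (by rw [← hvw, e])
  set a := Function.update v i r with ha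
  set b := Function.update v i (c r) with hb'
  have ai : a i = r := by simp [ha]
  have bi : b i = c r := by simp [hb']
  have ao : ∀ m, m ≠ i → a m = v m := fun m hm => by simp [ha, hm]
  have bo : ∀ m, m ≠ i → b m = v m := fun m hm => by simp [hb', hm]
  have habne : a ≠ b := fun e => hc' r (by rw [← bi, ← e, ai])
  -- other words are dichotomous to the pair outside `i`
  have key : ∀ x ∈ V, x ≠ v → x ≠ w → ∃ m, m ≠ i ∧ x m = c (v m) := by
    intro x hx h1 h2
    obtain ⟨m, hm⟩ := hV.1 x hx v hv h1
    by_cases hmi : m = i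
    · obtain ⟨m', hm'⟩ := hV.1 x hx w hw h2
      by_cases hmi' : m' = i
      · rw [hmi] at hm
        rw [hmi', ← hvw, hm] at hm'
        exact absurd hm' (hc' _)
      · exact ⟨m', hmi', by rw [ht.2 m' hmi']; exact hm'⟩
    · exact ⟨m, hmi, hm⟩
  have keyne : ∀ x ∈ V, x ≠ v → x ≠ w → ∀ y : Fin d → S, (∀ m, m ≠ i → y m = v m) →
      Dich c x y ∧ Dich c y x ∧ x ≠ y := by
    intro x hx h1 h2 y hy
    obtain ⟨m, hmi, hm⟩ := key x hx h1 h2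
    refine ⟨⟨m, by rw [hy m hmi]; exact hm⟩, ⟨m, by rw [hy m hmi, hm, hc]⟩, ?_⟩
    rintro rfl
    rw [hy m hmi] at hm
    exact hc' _ hm.symm
  have hnotQ : ∀ x : Fin d → S, x ∈ Q → x ≠ v ∧ x ≠ w := by
    intro x hx
    obtain ⟨m, hm1, hm2⟩ := hb
    have h := hQq x hx m
    constructor
    · rintro rfl
      tauto
    · rintro rfl
      by_cases hmi : m = i
      · subst hmi
        rw [hvw] at hm1 hm2
        rcases h with h | h
        · exact hm2 (by rw [h])
        · exact hm1 (by rw [h, hc])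
      · rw [ht.2 m hmi] at hm1 hm2
        tauto
  have memrest : ∀ x, x ∈ V \ {v, w} ↔ x ∈ V ∧ x ≠ v ∧ x ≠ w := by
    intro x; simp
  have hQW : Q ⊆ (V \ {v, w}) ∪ {a, b} := by
    intro x hx
    exact Finset.mem_union_left _ ((memrest x).2 ⟨hQV hx, hnotQ x hx⟩)
  have hdisj : Disjoint (V \ {v, w}) {a, b} := by
    rw [Finset.disjoint_left]
    intro x hx hx2
    obtain ⟨h0, h1, h2⟩ := (memrest x).1 hx
    simp only [Finset.mem_insert, Finset.mem_singleton] at hx2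
    rcases hx2 with h | h
    · exact (keyne x h0 h1 h2 a ao).2.2 h
    · exact (keyne x h0 h1 h2 b bo).2.2 h
  have hsubV : ({v, w} : Finset (Fin d → S)) ⊆ V := by
    intro x hx
    simp only [Finset.mem_insert, Finset.mem_singleton] at hx
    rcases hx with rfl | rfl <;> assumption
  refine ⟨(V \ {v, w}) ∪ {a, b}, ⟨?_, ?_⟩, hQW, ⟨?_, hQW⟩, ?_, ?_, ?_, ?_⟩
  · intro x hx y hy hxy
    simp only [Finset.mem_union, memrest, Finset.mem_insert, Finset.mem_singleton] at hx hy
    rcases hx with ⟨hx0, hx1, hx2⟩ | hx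
    · rcases hy with ⟨hy0, hy1, hy2⟩ | rfl | rfl
      · exact hV.1 x hx0 y hy0 hxy
      · exact (keyne x hx0 hx1 hx2 _ ao).1
      · exact (keyne x hx0 hx1 hx2 _ bo).1
    · rcases hy with ⟨hy0, hy1, hy2⟩ | hy
      · rcases hx with rfl | rfl
        · exact (keyne y hy0 hy1 hy2 _ ao).2.1
        · exact (keyne y hy0 hy1 hy2 _ bo).2.1
      · rcases hx with hx | hx <;> rcases hy with hy | hy
        · exact absurd (hx.trans hy.symm) hxy
        · exact ⟨i, by rw [hx, hy, ai, bi, hc]⟩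
        · exact ⟨i, by rw [hx, hy, ai, bi]⟩
        · exact absurd (hx.trans hy.symm) hxy
  · rw [Finset.card_union_of_disjoint hdisj, Finset.card_pair habne,
      Finset.card_sdiff_of_subset hsubV, Finset.card_pair hvwne, ← hV.2]
    have := Finset.card_le_card hsubV
    rw [Finset.card_pair hvwne] at this
    omega
  · exact ⟨v, w, a, b, i, hv, hw, ht, ⟨by rw [ai, bi, hc],
      fun m hm => by rw [ao m hm, bo m hm]⟩, ao, rfl⟩
  · unfold tbad
    rw [Finset.sum_union hdisj, Finset.sum_pair habne, ← Finset.sum_sdiff hsubV,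
      Finset.sum_pair hvwne]
    have e1 := nbad_update c q v a i ao
    have e2 := nbad_update c q w b i (fun m hm => by rw [bo m hm, ht.2 m hm])
    have swap : ∀ s : S, (c s = q i ∨ c s = c (q i)) ↔ (s = q i ∨ s = c (q i)) := by
      intro s
      constructor
      · rintro (h | h)
        · right; rw [← h, hc]
        · left; exact cinj h
      · rintro (h | h)
        · right; rw [h]
        · left; rw [h, hc]
    rw [ai] at e1
    rw [bi, hwv] at e2
    simp only [swap] at e2
    omega
  · simp
  · simp
  · intro x hx h1 h2
    exact Finset.mem_union_left _ ((memrest x).2 ⟨hx, h1, h2⟩)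

theorem full (c : S → S) (hc : ∀ s, c (c s) = s) (hc' : ∀ s, c s ≠ s)
    (V U : Finset (Fin d → S)) (hV : CubeTiling c V) (s : Fin d → S) (hsV : s ∈ V)
    (hU : ∀ v : Fin d → S, v ∈ U ↔ ∀ i, v i = s i ∨ v i = c (s i))
    (hn : ∀ v ∈ V, v ∈ U → ∀ i, Function.update v i (c (v i)) ∈ V) : V = U := by
  classical
  have hUV : U ⊆ V := by
    intro u hu
    have hne : (V ∩ U).Nonempty :=
      ⟨s, Finset.mem_inter.2 ⟨hsV, (hU s).2 fun i => Or.inl rfl⟩⟩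
    obtain ⟨v, hv, hmin⟩ := Finset.exists_min_image _
      (fun v : Fin d → S => (Finset.univ.filter fun m => v m ≠ u m).card) hne
    rw [Finset.mem_inter] at hv
    obtain ⟨hvV, hvU⟩ := hv
    by_cases hvu : v = u
    · rwa [← hvu]
    · exfalso
      obtain ⟨i, hi⟩ := Function.ne_iff.1 hvu
      have hvi := (hU v).1 hvU i
      have hui := (hU u).1 hu i
      have hcv : c (v i) = u i := by
        rcases hvi with h | h <;> rcases hui with h' | h'
        · exact absurd (h.trans h'.symm) hi
        · rw [h, h']
        · rw [h, h', hc]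
        · exact absurd (h.trans h'.symm) hi
      have hmem : Function.update v i (c (v i)) ∈ V ∩ U := by
        rw [Finset.mem_inter]
        refine ⟨hn v hvV hvU i, (hU _).2 fun m => ?_⟩
        by_cases hm : m = i
        · subst hm
          rw [Function.update_self, hcv]; exact hui
        · rw [Function.update_of_ne hm]
          exact (hU v).1 hvU m
      have h1 := hmin _ hmem
      refine absurd h1 (not_le.2 (Finset.card_lt_card ?_))
      rw [Finset.ssubset_iff_of_subset]
      · refine ⟨i, by simp [hi], by simp [hcv]⟩
      · intro m
        simp only [Finset.mem_filter, Finset.mem_univ, true_and]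
        by_cases hm : m = i
        · subst hm
          intro _; exact hi
        · rw [Function.update_of_ne hm]; exact id
  refine Finset.Subset.antisymm ?_ hUV
  intro v hv
  choose p hp using fun m => exists_pt1 c hc hc' (v m)
  let u : Fin d → S := fun m => if (p m).1 (s m) = true then s m else c (s m)
  have huU : u ∈ U := (hU u).2 fun m => by
    simp only [u]
    split_ifs <;> simp
  have hpu : ∀ m, (p m).1 (u m) = true := by
    intro m
    simp only [u]
    split_ifs with h
    · exact h
    · rw [(p m).2]; simpa using h
  by_cases h : v = u
  · rw [h]; exact huU
  · exact absurd (hV.1 v hv u (hUV huU) h) (not_dich_of_pt c p v u hp hpu)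

theorem progress (c : S → S) (hc : ∀ s, c (c s) = s) (hc' : ∀ s, c s ≠ s)
    (q : Fin 4 → S) (Q V : Finset (Fin 4 → S)) (hV : CubeTiling c V) (hQV : Q ⊆ V)
    (hQq : ∀ x ∈ Q, ∀ m, x m = q m ∨ x m = c (q m))
    (h : BadTwin c q V ∨ Config c q V) :
    ∃ W, CubeTiling c W ∧ Q ⊆ W ∧ GCFix c Q V W ∧ tbad c q W < tbad c q V := by
  have cinj : ∀ {s t : S}, c s = c t → s = t := fun {s t} h => by rw [← hc s, h, hc]
  rcases h with ⟨v, hv, w, hw, i, ht, h1, h2⟩ | h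
  · obtain ⟨W, hW, hQW, hs, hle, -⟩ := step c hc hc' q Q V hV hQV hQq v w i hv hw ht
      ⟨i, h1, h2⟩ (q i)
    refine ⟨W, hW, hQW, Relation.ReflTransGen.single hs, ?_⟩
    simp [h1, h2] at hle
    omega
  · obtain ⟨i, j, k, l, hji, hki, hli, hjk, hjl, hkl, hall, w, hw, v, hv, x, hx, y, hy,
      hvi, hvj, hvk, hvl, hxi, hxj, hxk, hxl, hxl', hxy, hbad⟩ := h
    have nc : ∀ s : S, s ≠ c s := fun s => (hc' s).symm
    -- first operation
    obtain ⟨W1, hW1, hQW1, hs1, hle1, ht1, ht2, hk1⟩ := step c hc hc' q Q V hV hQV hQq x y l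
      hx hy hxy ⟨k, by rw [hxk]; exact hbad k hki⟩ (w l)
    have hyj : y j = c (w j) := by rw [← hxy.2 j hjl, hxj]
    have hyk : y k = w k := by rw [← hxy.2 k hkl, hxk]
    have hw1 : w ∈ W1 := hk1 w hw
      (fun e => nc (w j) (by rw [← hxj, ← e])) (fun e => nc (w j) (by rw [← hyj, ← e]))
    have hv1 : v ∈ W1 := hk1 v hv
      (fun e => nc (w k) (by rw [← hvk, e, hxk])) (fun e => nc (w k) (by rw [← hvk, e, hyk]))
    set t1 := Function.update x l (w l) with ht1d
    set t2 := Function.update x l (c (w l)) with ht2d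
    have t1l : t1 l = w l := by simp [ht1d]
    have t2l : t2 l = c (w l) := by simp [ht2d]
    have t1o : ∀ m, m ≠ l → t1 m = x m := fun m hm => by simp [ht1d, hm]
    have t2o : ∀ m, m ≠ l → t2 m = x m := fun m hm => by simp [ht2d, hm]
    have htw1 : TwinPair c w t1 j := by
      refine ⟨by rw [t1o j hjl, hxj, hc], fun m hm => ?_⟩
      rcases hall m with rfl | rfl | rfl | rfl
      · rw [t1o _ hli.symm, hxi]
      · exact absurd rfl hm
      · rw [t1o _ hkl, hxk]
      · rw [t1l]
    obtain ⟨W2, hW2, hQW2, hs2, hle2, -, -, hk2⟩ := step c hc hc' q Q W1 hW1 hQW1 hQq w t1 j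
      hw1 ht1 htw1 ⟨j, hbad j hji⟩ (q j)
    have t1k : t1 k = w k := by rw [t1o k hkl, hxk]
    have t2k : t2 k = w k := by rw [t2o k hkl, hxk]
    have hv2 : v ∈ W2 := hk2 v hv1
      (fun e => nc (w k) (by rw [← hvk, e])) (fun e => nc (w k) (by rw [← hvk, e, t1k]))
    have ht2' : t2 ∈ W2 := hk2 t2 ht2
      (fun e => nc (w l) (by rw [← t2l, e])) (fun e => nc (w l) (by rw [← t2l, e, t1l]))
    have htw2 : TwinPair c v t2 k := by
      refine ⟨by rw [t2k, hvk], fun m hm => ?_⟩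
      rcases hall m with rfl | rfl | rfl | rfl
      · rw [t2o _ hli.symm, hxi, hvi]
      · rw [t2o _ hjl, hxj, hvj]
      · exact absurd rfl hm
      · rw [t2l, hvl]
    have hvkbad : v k ≠ q k ∧ v k ≠ c (q k) := by
      rw [hvk]
      exact ⟨fun e => (hbad k hki).2 (by rw [← e, hc]), fun e => (hbad k hki).1 (cinj e)⟩
    obtain ⟨W3, hW3, hQW3, hs3, hle3, -⟩ := step c hc hc' q Q W2 hW2 hQW2 hQq v t2 k
      hv2 ht2' htw2 ⟨k, hvkbad⟩ (q k)
    have g1 : GCFix c Q V W1 := Relation.ReflTransGen.single hs1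
    have g2 : GCFix c Q V W2 := Relation.ReflTransGen.tail g1 hs2
    refine ⟨W3, hW3, hQW3, Relation.ReflTransGen.tail g2 hs3, ?_⟩
    have b1 := hbad j hji
    simp only [b1.1, b1.2, or_self, if_false, true_or, if_true] at hle2
    simp only [hvkbad.1, hvkbad.2, or_self, if_false, true_or, if_true] at hle3
    split_ifs at hle1 <;> omega

theorem main_aux (c : S → S) (hc : ∀ s, c (c s) = s) (hc' : ∀ s, c s ≠ s)
    (Q U : Finset (Fin 4 → S)) (q : Fin 4 → S) (hq : q ∈ Q)
    (hU : ∀ v : Fin 4 → S, v ∈ U ↔ ∀ i, v i = q i ∨ v i = c (q i)) (hQU : Q ⊆ U) (n : ℕ) :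
    ∀ V : Finset (Fin 4 → S), CubeTiling c V → Q ⊆ V → tbad c q V = n → GCFix c Q V U := by
  have hQq : ∀ x ∈ Q, ∀ m, x m = q m ∨ x m = c (q m) := fun x hx => (hU x).1 (hQU hx)
  induction n using Nat.strong_induction_on with
  | _ n ih =>
    intro V hV hQV hn
    by_cases h : BadTwin c q V ∨ Config c q V
    · obtain ⟨W, hW, hQW, hg, hlt⟩ := progress c hc hc' q Q V hV hQV hQq h
      exact Relation.ReflTransGen.trans hg (ih _ (hn ▸ hlt) W hW hQW rfl)
    · have hVU : V = U := by
        refine full c hc hc' V U hV q (hQV hq) hU ?_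
        intro v hv hvU i
        have hvq := (hU v).1 hvU
        have trans : ∀ (s : S) (m : Fin 4), (s ≠ v m ∧ s ≠ c (v m)) → (s ≠ q m ∧ s ≠ c (q m)) := by
          rintro s m ⟨h1, h2⟩
          rcases hvq m with e | e
          · rw [← e]; exact ⟨h1, h2⟩
          · rw [e, hc] at h2
            rw [e] at h1
            exact ⟨h2, h1⟩
        rcases neighbour c hc hc' V hV v hv i with h1 | h1 | h1
        · exact h1
        · exfalso
          apply h
          left
          obtain ⟨a, ha, b, hb, m, ht, hm⟩ := h1
          exact ⟨a, ha, b, hb, m, ht, trans _ _ hm⟩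
        · exfalso
          apply h
          right
          obtain ⟨i, j, k, l, hji, hki, hli, hjk, hjl, hkl, hall, w, hw, v', hv', x, hx, y, hy,
            hvi, hvj, hvk, hvl, hxi, hxj, hxk, hxl, hxl', hxy, hbad⟩ := h1
          exact ⟨i, j, k, l, hji, hki, hli, hjk, hjl, hkl, hall, w, hw, v', hv', x, hx, y, hy,
            hvi, hvj, hvk, hvl, hxi, hxj, hxk, hxl, hxl', hxy,
            fun m hm => trans _ _ (hbad m hm)⟩
      rw [hVU]
      exact Relation.ReflTransGen.refl

end Aux

/-- Theorem "stab4" of the paper. -/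
theorem simple_component_fixed_dim4
    {S : Type} [Fintype S] [DecidableEq S] (c : S → S)
    (hc : ∀ s, c (c s) = s) (hc' : ∀ s, c s ≠ s)
    (V Q U : Finset (Fin 4 → S)) (hV : CubeTiling c V)
    (hQne : Q.Nonempty) (hU : SimpleCubeTiling c U) (hQ : Q = V ∩ U) :
    GCFix c Q V U := by
  obtain ⟨q, hq⟩ := hQne
  have hQV : Q ⊆ V := by rw [hQ]; exact Finset.inter_subset_left
  have hQU : Q ⊆ U := by rw [hQ]; exact Finset.inter_subset_right
  obtain ⟨s, hs⟩ := hU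
  have hqs := (hs q).1 (hQU hq)
  refine main_aux c hc hc' Q U q hq ?_ hQU _ V hV hQV rfl
  intro v
  rw [hs v]
  refine forall_congr' fun i => ?_
  rcases hqs i with h | h
  · rw [h]
  · rw [h, hc]; exact or_comm

end PolyboxPaper
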